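/- arXiv:2402.02681 — 8 statements merged into one kernel-verified Lean document; each statement's English description precedes it below -/
import Mathlib

section
/- Let G be an abelian group and n a natural number such that every element of G is an n-th power (for all g ∈ G there exists g' with g'^n = g). Let C be a nontrivial subgroup of G such that c^n = 1 for every c ∈ C. Then C has no complement in G: there is no subgroup H of G such that every element of G can be written uniquely as c·h with c ∈ C and h ∈ H. -/
theorem pow_mem_of_mem_sup_normal {G : Type*} [Group G] {C N : Subgroup G} [N.Normal] {n : ℕ}
    (hCn : ∀ c ∈ C, c ^ n ∈ N) {g : G} (hg : g ∈ C ⊔ N) : g ^ n ∈ N := by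
  obtain ⟨c, hc, h, hh, rfl⟩ := Subgroup.mem_sup_of_normal_right.1 hg
  rw [← QuotientGroup.eq_one_iff]
  calc (((c * h) ^ n : G) : G ⧸ N)
    _ = ((c : G ⧸ N) * h) ^ n := rfl
    _ = (c : G ⧸ N) ^ n := by rw [(QuotientGroup.eq_one_iff h).2 hh, mul_one]
    _ = 1 := (QuotientGroup.eq_one_iff (c ^ n)).2 (hCn c hc)

theorem no_complement_of_divisible_general {G : Type*} [Group G] (n : ℕ)
    (C : Subgroup G) (hdiv : ∀ c ∈ C, ∃ g : G, g ^ n = c) (hC : C ≠ ⊥)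
    (hCn : ∀ c ∈ C, c ^ n = 1) :
    ¬ ∃ H : Subgroup G, H.Normal ∧ C.IsComplement' H := by
  rintro ⟨H, _, hCH⟩
  have hle : C ≤ H := by
    intro c hc
    obtain ⟨g, rfl⟩ := hdiv c hc
    have hg : g ∈ C ⊔ H := hCH.sup_eq_top ▸ Subgroup.mem_top g
    exact pow_mem_of_mem_sup_normal (fun c hc ↦ hCn c hc ▸ H.one_mem) hg
  exact hC (hCH.disjoint.eq_bot_of_le hle)

/-- In an abelian group in which every element is an `n`-th power, a nontrivial subgroup
all of whose elements satisfy `c ^ n = 1` has no complement. -/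
theorem no_complement_of_divisible
    {G : Type*} [CommGroup G] (n : ℕ)
    (hdiv : ∀ g : G, ∃ g' : G, g' ^ n = g)
    (C : Subgroup G) (hC : C ≠ ⊥) (hCn : ∀ c ∈ C, c ^ n = 1) :
    ¬ ∃ H : Subgroup G, C.IsComplement' H := by
  rintro ⟨H, hCH⟩
  exact no_complement_of_divisible_general n C (fun c _ ↦ hdiv c) hC hCn ⟨H, inferInstance, hCH⟩
end

section
/- In the additive circle group ℝ/ℤ (AddCircle (1 : ℝ)), for every natural number n ≥ 2, the cyclic subgroup of order n generated by the image of 1/n has no complement: there is no additive subgroup H of ℝ/ℤ such that every element of ℝ/ℤ can be written uniquely as c + h with c in this cyclic subgroup and h ∈ H. -/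
/-!
Multiplication by `n` maps the circle onto itself and kills the subgroup `C` generated by `1/n`.
If `C + H` is the whole circle, then applying multiplication by `n` shows that `H` is already the
whole circle, so `C` meets `H` in `C ≠ 0`.
-/

theorem sup_eq_top_of_isComplement' {G : Type*} [AddGroup G] {K H : AddSubgroup G}
    (hKH : K.IsComplement' H) : K ⊔ H = ⊤ := by
  refine (AddSubgroup.eq_top_iff' _).2 fun g ↦ ?_
  obtain ⟨⟨k, h⟩, rfl⟩ := hKH.surjective g
  exact AddSubgroup.add_mem_sup k.2 h.2

section DivisibleGroup

variable {A : Type*} [AddCommGroup A] {n : ℤ} {C H : AddSubgroup A}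

theorem eq_top_of_le_torsionBy_of_sup_eq_top (hA : Function.Surjective fun a : A ↦ n • a)
    (hC : C ≤ AddSubgroup.torsionBy A n) (hCH : C ⊔ H = ⊤) : H = ⊤ := by
  refine (AddSubgroup.eq_top_iff' H).2 fun b ↦ ?_
  obtain ⟨a, rfl⟩ := hA b
  obtain ⟨c, hc, h, hh, rfl⟩ := AddSubgroup.mem_sup.1 (hCH ▸ AddSubgroup.mem_top a)
  have hnc : n • c = 0 := hC hc
  simpa only [smul_add, hnc, zero_add] using H.zsmul_mem hh n

theorem addCircle_cyclic_no_complement_general (hA : Function.Surjective fun a : A ↦ n • a)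
    (hC : C ≤ AddSubgroup.torsionBy A n) (hC_ne_bot : C ≠ ⊥) :
    ¬ ∃ H : AddSubgroup A, C.IsComplement' H := by
  rintro ⟨H, hCH⟩
  obtain rfl : H = ⊤ :=
    eq_top_of_le_torsionBy_of_sup_eq_top hA hC (sup_eq_top_of_isComplement' hCH)
  exact hC_ne_bot (AddSubgroup.isComplement'_top_right.1 hCH)

end DivisibleGroup

section PeriodDiv

variable {𝕜 : Type*} [Field 𝕜] [LinearOrder 𝕜] [IsStrictOrderedRing 𝕜] (p : 𝕜) [Fact (0 < p)]
  {n : ℕ}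

theorem zmultiples_period_div_le_torsionBy (hn : 0 < n) :
    AddSubgroup.zmultiples ((p / n : 𝕜) : AddCircle p) ≤ AddSubgroup.torsionBy (AddCircle p) n := by
  refine AddSubgroup.zmultiples_le_of_mem (AddSubgroup.torsionBy.nsmul_iff.2 ?_)
  exact addOrderOf_dvd_iff_nsmul_eq_zero.1 (AddCircle.addOrderOf_period_div hn).dvd

theorem zmultiples_period_div_ne_bot (hn : 2 ≤ n) :
    AddSubgroup.zmultiples ((p / n : 𝕜) : AddCircle p) ≠ ⊥ := by
  rw [Ne, AddSubgroup.zmultiples_eq_bot, ← AddMonoid.addOrderOf_eq_one_iff,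
    AddCircle.addOrderOf_period_div (by lia)]
  lia

end PeriodDiv

/-- In the additive circle `ℝ/ℤ`, for every `n ≥ 2` the cyclic subgroup of order `n`
generated by the image of `1/n` has no complement. -/
theorem addCircle_cyclic_no_complement (n : ℕ) (hn : 2 ≤ n) :
    ¬ ∃ H : AddSubgroup (AddCircle (1 : ℝ)),
        (AddSubgroup.zmultiples ((1 / (n : ℝ) : ℝ) : AddCircle (1 : ℝ))).IsComplement' H :=
  addCircle_cyclic_no_complement_general (DivisibleBy.surjective_smul _ _ (by lia : (n : ℤ) ≠ 0))
    (zmultiples_period_div_le_torsionBy 1 (by lia)) (zmultiples_period_div_ne_bot 1 hn)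
end

section
/- Let O(2) denote the group of 2×2 real orthogonal matrices, and let C be a nontrivial finite subgroup of O(2) all of whose elements have determinant 1 (i.e. C is contained in the rotation subgroup SO(2)). Then C has no complement in O(2): there is no subgroup H of O(2) such that every element of O(2) can be written uniquely as c·h with c ∈ C and h ∈ H. -/
/-!
Rotations commute and have `n`-th roots for every `n ≠ 0`, as they are parametrized by the circle.
Let `H` be a complement of `C` and let `r` be a rotation with `r ^ n = a ∈ C`. Write `r = c * h`
with `c ∈ C` and `h ∈ H`. Since `c` commutes with `r`, it commutes with `h`, so
`a * 1 = c ^ n * h ^ n`, and uniqueness of the decomposition gives `a = c ^ n`. Thus `C` inherits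
the divisibility of the rotation group, which is impossible for a nontrivial finite group.
-/

theorem not_surjective_pow_natCard (G : Type*) [Group G] [Nontrivial G] :
    ¬ Function.Surjective fun g : G ↦ g ^ Nat.card G := by
  intro hsurj
  obtain ⟨x, hx⟩ := exists_ne (1 : G)
  obtain ⟨y, rfl⟩ := hsurj x
  exact hx pow_card_eq_one'

theorem exists_mem_pow_eq_of_isComplement' {G : Type*} [Group G] {C H : Subgroup G}
    (hCH : C.IsComplement' H) {r : G} (hr : r ∈ Subgroup.centralizer (C : Set G)) {n : ℕ}
    (hrn : r ^ n ∈ C) : ∃ c ∈ C, c ^ n = r ^ n := by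
  obtain ⟨⟨⟨c, hc⟩, ⟨h, hh⟩⟩, rfl : c * h = r⟩ := hCH.surjective r
  have hcomm : Commute c h := by
    have hcr : c * (c * h) = c * h * c := Subgroup.mem_centralizer_iff.1 hr c hc
    exact mul_left_cancel (hcr.trans (mul_assoc c h c))
  have hpow : (c * h) ^ n = c ^ n * h ^ n := hcomm.mul_pow n
  have hhn : h ^ n = 1 := by
    refine Subgroup.disjoint_def.1 hCH.disjoint ?_ (H.pow_mem hh n)
    rwa [hpow, C.mul_mem_cancel_left (C.pow_mem hc n)] at hrn
  exact ⟨c, hc, by rw [hpow, hhn, mul_one]⟩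

theorem surjective_pow_of_isComplement' {A G : Type*} [CommGroup A] [Group G] (f : A →* G)
    {C H : Subgroup G} (hCf : C ≤ f.range) (hCH : C.IsComplement' H) {n : ℕ}
    (hA : Function.Surjective fun a : A ↦ a ^ n) :
    Function.Surjective fun c : C ↦ c ^ n := by
  rintro ⟨x, hx⟩
  obtain ⟨a, rfl⟩ := hCf hx
  obtain ⟨b, rfl⟩ := hA a
  have hb : f b ∈ Subgroup.centralizer (C : Set G) := by
    refine Subgroup.mem_centralizer_iff.2 fun y hy ↦ ?_
    obtain ⟨d, rfl⟩ := hCf hy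
    rw [← map_mul, mul_comm, map_mul]
  rw [map_pow] at hx
  obtain ⟨c, hc, hcb⟩ := exists_mem_pow_eq_of_isComplement' hCH hb hx
  exact ⟨⟨c, hc⟩, Subtype.ext (hcb.trans (map_pow f b n).symm)⟩

theorem surjective_pow_circle {n : ℕ} (hn : n ≠ 0) :
    Function.Surjective fun z : Circle ↦ z ^ n := by
  intro z
  obtain ⟨t, rfl⟩ := Circle.exp_surjective z
  refine ⟨Circle.exp (t / n), ?_⟩
  calc Circle.exp (t / n) ^ n = Circle.exp (n * (t / n)) := (Circle.exp_natCast_mul _ n).symm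
    _ = Circle.exp t := by rw [mul_div_cancel₀ _ (Nat.cast_ne_zero.2 hn)]

theorem leftMulMatrix_circle_mem_specialOrthogonalGroup (z : Circle) :
    Algebra.leftMulMatrix Complex.basisOneI (z : ℂ) ∈
      Matrix.specialOrthogonalGroup (Fin 2) ℝ := by
  rw [Algebra.leftMulMatrix_complex, Matrix.of_mem_specialOrthogonalGroup_fin_two_iff]
  have hz : z.1.re * z.1.re + z.1.im * z.1.im = 1 := z.normSq_coe
  exact ⟨rfl, rfl, by linarith⟩

/-- The rotation of the plane `ℂ = ℝ²` by a unit complex number `z`, that is, the matrix of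
multiplication by `z` in the basis `1, I`, as a homomorphism to `O(2)`. -/
noncomputable def rotationHom : Circle →* Matrix.orthogonalGroup (Fin 2) ℝ :=
  ((Algebra.leftMulMatrix Complex.basisOneI : ℂ →* Matrix (Fin 2) (Fin 2) ℝ).comp
    Circle.coeHom).codRestrict _ fun z ↦ (leftMulMatrix_circle_mem_specialOrthogonalGroup z).1

theorem coe_rotationHom (z : Circle) :
    (rotationHom z : Matrix (Fin 2) (Fin 2) ℝ) =
      !![(z : ℂ).re, -(z : ℂ).im; (z : ℂ).im, (z : ℂ).re] :=
  Algebra.leftMulMatrix_complex z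

theorem mem_range_rotationHom_iff {A : Matrix.orthogonalGroup (Fin 2) ℝ} :
    A ∈ rotationHom.range ↔ (A : Matrix (Fin 2) (Fin 2) ℝ).det = 1 := by
  constructor
  · rintro ⟨z, rfl⟩
    exact (leftMulMatrix_circle_mem_specialOrthogonalGroup z).2
  · intro hdet
    obtain ⟨hdiag, hanti, hnorm⟩ :=
      Matrix.mem_specialOrthogonalGroup_fin_two_iff.1 ⟨A.2, hdet⟩
    let w : ℂ := ⟨A.1 0 0, A.1 1 0⟩
    have hw : ‖w‖ = 1 := by
      rw [Complex.norm_def, Complex.normSq_mk, Real.sqrt_eq_one]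
      rw [hanti] at hnorm
      linarith
    let z : Circle := ⟨w, mem_sphere_zero_iff_norm.2 hw⟩
    have hz : (rotationHom z : Matrix (Fin 2) (Fin 2) ℝ) =
        !![A.1 0 0, -A.1 1 0; A.1 1 0, A.1 0 0] := coe_rotationHom z
    refine ⟨z, Subtype.ext ?_⟩
    rw [Matrix.eta_fin_two A.1, hanti, ← hdiag, hz]

theorem no_complement_in_O2_of_rotations_general
    (C : Subgroup (Matrix.orthogonalGroup (Fin 2) ℝ)) {n : ℕ} (hn : n ≠ 0)
    (hC : ¬ Function.Surjective fun c : C ↦ c ^ n)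
    (hdet : ∀ c ∈ C, ((c : Matrix (Fin 2) (Fin 2) ℝ)).det = 1) :
    ¬ ∃ H : Subgroup (Matrix.orthogonalGroup (Fin 2) ℝ), C.IsComplement' H := by
  rintro ⟨H, hCH⟩
  have hrot : C ≤ rotationHom.range := fun c hc ↦ mem_range_rotationHom_iff.2 (hdet c hc)
  exact hC (surjective_pow_of_isComplement' rotationHom hrot hCH (surjective_pow_circle hn))

/-- A nontrivial finite subgroup of `O(2)` contained in the rotation subgroup `SO(2)`
(all elements have determinant `1`) has no complement in `O(2)`. -/
theorem no_complement_in_O2_of_rotations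
    (C : Subgroup (Matrix.orthogonalGroup (Fin 2) ℝ))
    (hfin : Finite C) (hC : C ≠ ⊥)
    (hdet : ∀ c ∈ C, ((c : Matrix (Fin 2) (Fin 2) ℝ)).det = 1) :
    ¬ ∃ H : Subgroup (Matrix.orthogonalGroup (Fin 2) ℝ), C.IsComplement' H :=
  have : Nontrivial C := C.nontrivial_iff_ne_bot.2 hC
  no_complement_in_O2_of_rotations_general C Nat.card_pos.ne' (not_surjective_pow_natCard C) hdet
end

section
/- Let Γ = O(2) × C₂, where O(2) is the group of 2×2 real orthogonal matrices and C₂ = {1, −1} is a cyclic group of order 2 (Γ is isomorphic to the point group D_∞h). Call an element (Q, ε) ∈ Γ a pure rotation if det(Q)·ε = 1. Let A be a normal subgroup of Γ such that A ∩ (SO(2) × {1}) is nontrivial and finite, and such that every pure rotation in A lies in SO(2) × {1}. Then A has no complement in Γ: there is no subgroup H of Γ such that every element of Γ can be written uniquely as a·h with a ∈ A and h ∈ H. -/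
/-!
A rotation of the plane is multiplication by a unit complex number, so it has rotations as `n`-th
roots for all `n ≠ 0`. If `H` has finite index in a group, then `r ^ (index H)! ∈ H` for every `r`;
hence every finite-index subgroup of `Γ` contains `SO(2) × {1}`. Since `SO(2) × {1}` itself has
finite index and meets `A` in a finite group, `A` is finite. A complement of `A` would then have
finite index, so it would contain the nontrivial group `A ∩ (SO(2) × {1})`.
-/

section Group

variable {G : Type*} [Group G]

theorem mem_of_finiteIndex_of_forall_exists_pow_eq (H : Subgroup G) [H.FiniteIndex] {g : G}
    (hg : ∀ n ≠ 0, ∃ r, r ^ n = g) : g ∈ H := by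
  obtain ⟨r, rfl⟩ := hg H.index.factorial H.index.factorial_ne_zero
  exact H.pow_mem_of_index_ne_zero_of_dvd Subgroup.FiniteIndex.index_ne_zero r
    fun _ => Nat.dvd_factorial

instance finiteIndex_prod {G' : Type*} [Group G'] (H : Subgroup G) (K : Subgroup G')
    [H.FiniteIndex] [K.FiniteIndex] : (H.prod K).FiniteIndex :=
  ⟨H.index_prod K ▸
    mul_ne_zero Subgroup.FiniteIndex.index_ne_zero Subgroup.FiniteIndex.index_ne_zero⟩

theorem finite_of_finite_inter_of_finiteIndex {A K : Subgroup G} [K.FiniteIndex]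
    (hAK : (A ∩ K : Set G).Finite) : Finite A :=
  have : Finite (K.subgroupOf A) :=
    (hAK.preimage Subtype.val_injective.injOn).subset fun g hg => ⟨g.2, hg⟩
  (K.subgroupOf A).finite_iff_finite_and_finiteIndex.2 ⟨this, inferInstance⟩

theorem not_isComplement'_of_forall_exists_pow_eq {A : Subgroup G} [Finite A] {x : G}
    (hxA : x ∈ A) (hx1 : x ≠ 1) (hx : ∀ n ≠ 0, ∃ r, r ^ n = x) (H : Subgroup G) :
    ¬ A.IsComplement' H := by
  intro hAH
  have : H.FiniteIndex := ⟨hAH.index_eq_card ▸ Nat.card_pos.ne'⟩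
  have hxH : x ∈ H := mem_of_finiteIndex_of_forall_exists_pow_eq H hx
  exact hx1 (Subgroup.disjoint_def.1 hAH.disjoint hxA hxH)

end Group

section OrthogonalGroup

open Matrix

/-- The determinant as a homomorphism from `O(n, R)` to the unit group of `R`; its kernel is
`SO(n, R)` as a subgroup of `O(n, R)`. -/
def orthogonalDet (n R : Type*) [Fintype n] [DecidableEq n] [CommRing R] :
    orthogonalGroup n R →* Rˣ :=
  (detMonoidHom.comp (orthogonalGroup n R).subtype).toHomUnits

theorem mem_ker_orthogonalDet {n R : Type*} [Fintype n] [DecidableEq n] [CommRing R]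
    {Q : orthogonalGroup n R} : Q ∈ (orthogonalDet n R).ker ↔ (Q : Matrix n n R).det = 1 := by
  simp [orthogonalDet, MonoidHom.mem_ker]

theorem range_orthogonalDet_le (n R : Type*) [Fintype n] [DecidableEq n] [CommRing R] :
    (orthogonalDet n R).range ≤ rootsOfUnity 2 R := by
  rintro _ ⟨Q, rfl⟩
  have hdet : (Q : Matrix n n R).det * (Q : Matrix n n R)ᵀ.det = 1 := by
    rw [← det_mul, (mem_orthogonalGroup_iff n R).1 Q.2, det_one]
  rw [det_transpose, ← sq] at hdet
  exact (mem_rootsOfUnity 2 _).2 (Units.ext hdet)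

instance finiteIndex_ker_orthogonalDet (n R : Type*) [Fintype n] [DecidableEq n] [CommRing R]
    [IsDomain R] : (orthogonalDet n R).ker.FiniteIndex :=
  have : Finite (orthogonalDet n R).range :=
    .of_injective _ (Subgroup.inclusion_injective (range_orthogonalDet_le n R))
  inferInstance

theorem leftMulMatrix_complex_mem_specialOrthogonalGroup_iff {z : ℂ} :
    Algebra.leftMulMatrix Complex.basisOneI z ∈ specialOrthogonalGroup (Fin 2) ℝ ↔ ‖z‖ = 1 := by
  rw [Algebra.leftMulMatrix_complex, of_mem_specialOrthogonalGroup_fin_two_iff,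
    ← pow_eq_one_iff_of_nonneg (norm_nonneg z) two_ne_zero, Complex.sq_norm, Complex.normSq_apply]
  simp [sq]

theorem exists_leftMulMatrix_complex_eq {M : Matrix (Fin 2) (Fin 2) ℝ}
    (hdiag : M 0 0 = M 1 1) (hoff : M 0 1 = -M 1 0) :
    ∃ z : ℂ, Algebra.leftMulMatrix Complex.basisOneI z = M := by
  refine ⟨⟨M 0 0, M 1 0⟩, ?_⟩
  rw [Algebra.leftMulMatrix_complex, eta_fin_two M, hoff, hdiag]
  simp

theorem exists_pow_eq_of_mem_specialOrthogonalGroup {M : Matrix (Fin 2) (Fin 2) ℝ}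
    (hM : M ∈ specialOrthogonalGroup (Fin 2) ℝ) {n : ℕ} (hn : n ≠ 0) :
    ∃ N ∈ specialOrthogonalGroup (Fin 2) ℝ, N ^ n = M := by
  obtain ⟨hdiag, hoff, -⟩ := mem_specialOrthogonalGroup_fin_two_iff.1 hM
  obtain ⟨z, rfl⟩ := exists_leftMulMatrix_complex_eq hdiag hoff
  obtain ⟨w, rfl⟩ := IsAlgClosed.exists_pow_nat_eq z (Nat.pos_of_ne_zero hn)
  rw [leftMulMatrix_complex_mem_specialOrthogonalGroup_iff, norm_pow,
    pow_eq_one_iff_of_nonneg (norm_nonneg w) hn] at hM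
  exact ⟨_, leftMulMatrix_complex_mem_specialOrthogonalGroup_iff.2 hM, (map_pow _ w n).symm⟩

end OrthogonalGroup

theorem no_complement_in_O2_prod_C2_general {C : Type*} [Group C] [Finite C]
    (A : Subgroup (Matrix.orthogonalGroup (Fin 2) ℝ × C))
    (hfin : {x : Matrix.orthogonalGroup (Fin 2) ℝ × C |
        x ∈ A ∧ ((x.1 : Matrix (Fin 2) (Fin 2) ℝ).det = 1 ∧ x.2 = 1)}.Finite)
    (hnt : ∃ x ∈ A, ((x.1 : Matrix (Fin 2) (Fin 2) ℝ).det = 1 ∧ x.2 = 1) ∧ x ≠ 1) :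
    ¬ ∃ H : Subgroup (Matrix.orthogonalGroup (Fin 2) ℝ × C), A.IsComplement' H := by
  rintro ⟨H, hAH⟩
  have : Finite A := finite_of_finite_inter_of_finiteIndex
    (K := (orthogonalDet (Fin 2) ℝ).ker.prod ⊥)
    (hfin.subset fun _ ⟨hxA, hdet, hC⟩ => ⟨hxA, mem_ker_orthogonalDet.1 hdet, hC⟩)
  obtain ⟨⟨Q, c⟩, hxA, ⟨hdet, rfl : c = 1⟩, hx1⟩ := hnt
  refine not_isComplement'_of_forall_exists_pow_eq hxA hx1 (fun n hn => ?_) H hAH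
  obtain ⟨N, hN, hNQ⟩ := exists_pow_eq_of_mem_specialOrthogonalGroup
    (Matrix.mem_specialOrthogonalGroup_iff.2 ⟨Q.2, hdet⟩) hn
  exact ⟨(⟨N, (Matrix.mem_specialOrthogonalGroup_iff.1 hN).1⟩, 1),
    Prod.ext (Subtype.ext hNQ) (one_pow n)⟩

/-- In `Γ = O(2) × C₂` (isomorphic to the point group `D_∞h`, with `C₂ = {1,-1} ≅ ℤˣ`),
a normal subgroup `A` whose intersection with `SO(2) × {1}` is nontrivial and finite,
and all of whose pure rotations (elements `(Q, ε)` with `det Q · ε = 1`) lie in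
`SO(2) × {1}`, has no complement in `Γ`. -/
theorem no_complement_in_O2_prod_C2
    (A : Subgroup (Matrix.orthogonalGroup (Fin 2) ℝ × ℤˣ)) (hA : A.Normal)
    (hfin : {x : Matrix.orthogonalGroup (Fin 2) ℝ × ℤˣ |
        x ∈ A ∧ ((x.1 : Matrix (Fin 2) (Fin 2) ℝ).det = 1 ∧ x.2 = 1)}.Finite)
    (hnt : ∃ x ∈ A, ((x.1 : Matrix (Fin 2) (Fin 2) ℝ).det = 1 ∧ x.2 = 1) ∧ x ≠ 1)
    (hpure : ∀ x ∈ A,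
        (x.1 : Matrix (Fin 2) (Fin 2) ℝ).det * (((x.2 : ℤˣ) : ℤ) : ℝ) = 1 →
        ((x.1 : Matrix (Fin 2) (Fin 2) ℝ).det = 1 ∧ x.2 = 1)) :
    ¬ ∃ H : Subgroup (Matrix.orthogonalGroup (Fin 2) ℝ × ℤˣ), A.IsComplement' H :=
  no_complement_in_O2_prod_C2_general A hfin hnt
end

section
/- Let G be the circle group (the multiplicative group of complex numbers of modulus 1, which is SO(2)) acting on a set Ω, and let S be a finite subgroup of G of order n ≥ 2. If B ⊆ Ω is nonempty, invariant under all of G (g•B = B for every g ∈ G), and S acts freely on B (Stab_S(b) is trivial for every b ∈ B), then B has infinitely many S-orbits. -/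
open Pointwise

/-!
The circle is divisible, so it has no proper subgroup of finite index, and by orbit-stabilizer each
of its orbits is a single point or infinite. A nontrivial element of `S` moves every point of `B`,
so `B` contains an infinite circle orbit, which finitely many of the finite `S`-orbits cannot cover.
-/

theorem eq_top_of_finiteIndex_of_surjective_pow {G : Type*} [Group G]
    (hpow : ∀ n : ℕ, n ≠ 0 → Function.Surjective (· ^ n : G → G))
    (H : Subgroup G) [H.FiniteIndex] : H = ⊤ := by
  refine (Subgroup.eq_top_iff' H).mpr fun g => ?_
  obtain ⟨w, rfl⟩ := hpow H.normalCore.index Subgroup.FiniteIndex.index_ne_zero g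
  exact H.normalCore_le (H.normalCore.pow_index_mem w)

theorem circle_eq_top_of_finiteIndex (H : Subgroup Circle) [H.FiniteIndex] : H = ⊤ :=
  eq_top_of_finiteIndex_of_surjective_pow
    (fun n hn => haveI : NeZero n := ⟨hn⟩; (Circle.isQuotientCoveringMap_npow n).surjective) H

theorem finiteIndex_stabilizer_of_finite_orbit {G Ω : Type*} [Group G] [MulAction G Ω] {x : Ω}
    (hx : (MulAction.orbit G x).Finite) : (MulAction.stabilizer G x).FiniteIndex where
  index_ne_zero := by
    rw [MulAction.index_stabilizer]
    exact Set.ncard_ne_zero_of_mem (MulAction.mem_orbit_self x) hx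

theorem infinite_of_not_subset_fixedPoints {G Ω : Type*} [Group G] [MulAction G Ω]
    (hG : ∀ H : Subgroup G, H.FiniteIndex → H = ⊤) {B : Set Ω}
    (hinv : ∀ g : G, g • B = B) (hfix : ¬ B ⊆ MulAction.fixedPoints G Ω) : B.Infinite := by
  refine fun hB => hfix fun b hb g => ?_
  have orbit_subset : MulAction.orbit G b ⊆ B := by
    rintro _ ⟨h, rfl⟩
    exact hinv h ▸ Set.smul_mem_smul_set hb
  have stabilizer_eq_top : MulAction.stabilizer G b = ⊤ :=
    hG _ (finiteIndex_stabilizer_of_finite_orbit (hB.subset orbit_subset))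
  exact MulAction.mem_stabilizer_iff.mp (stabilizer_eq_top ▸ Subgroup.mem_top g)

theorem infinite_orbits_of_infinite {M Ω : Type*} [Monoid M] [MulAction M Ω] {B : Set Ω}
    (hB : B.Infinite) (horb : ∀ b ∈ B, (MulAction.orbit M b).Finite) :
    Infinite (Quotient (Setoid.ker fun b : B => MulAction.orbit M (b : Ω))) := by
  refine ⟨fun _ => hB (Set.Finite.of_finite_fibers (MulAction.orbit M) ?_ ?_)⟩
  · rw [Set.image_eq_range]
    exact Set.finite_coe_iff.mp (Finite.of_equiv _ (Setoid.quotientKerEquivRange _))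
  · rintro _ ⟨b, hb, rfl⟩
    exact (horb b hb).subset fun x hx => hx.2 ▸ MulAction.mem_orbit_self x

theorem not_subset_fixedPoints_of_free {G Ω : Type*} [Group G] [MulAction G Ω]
    (S : Subgroup G) [Nontrivial S] {B : Set Ω} (hne : B.Nonempty)
    (hfree : ∀ b ∈ B, ∀ s : S, (s : G) • b = b → s = 1) :
    ¬ B ⊆ MulAction.fixedPoints G Ω := by
  intro hfix
  obtain ⟨b, hb⟩ := hne
  obtain ⟨s, hs⟩ := exists_ne (1 : S)
  exact hs (hfree b hb s (hfix hb s))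

theorem infinite_orbits_of_free_circle_invariant_general {G Ω : Type*} [Group G] [MulAction G Ω]
    (hG : ∀ H : Subgroup G, H.FiniteIndex → H = ⊤) (S : Subgroup G) (B : Set Ω)
    (horb : ∀ b ∈ B, (MulAction.orbit S b).Finite) (hinv : ∀ g : G, g • B = B)
    (hfix : ¬ B ⊆ MulAction.fixedPoints G Ω) :
    Infinite (Quotient (Setoid.ker fun b : B => MulAction.orbit S (b : Ω))) :=
  infinite_orbits_of_infinite (infinite_of_not_subset_fixedPoints hG hinv hfix) horb

/-- If the circle group (≅ SO(2)) acts on `Ω`, `S` is a finite subgroup of order at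
least `2`, and `B ⊆ Ω` is nonempty, invariant under the whole circle group, and acted
on freely by `S`, then `B` has infinitely many `S`-orbits. -/
theorem infinite_orbits_of_free_circle_invariant
    {Ω : Type*} [MulAction Circle Ω] (S : Subgroup Circle)
    (hfin : Finite S) (hcard : 2 ≤ Nat.card S)
    (B : Set Ω) (hne : B.Nonempty)
    (hinv : ∀ g : Circle, g • B = B)
    (hfree : ∀ b ∈ B, ∀ s : S, (s : Circle) • b = b → s = 1) :
    Infinite (Quotient (Setoid.ker fun b : B => MulAction.orbit S (b : Ω))) :=
  have : Nontrivial S := Finite.one_lt_card_iff_nontrivial.mp hcard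
  infinite_orbits_of_free_circle_invariant_general (fun H _ => circle_eq_top_of_finiteIndex H) S B
    (fun _ _ => Set.finite_range _) hinv (not_subset_fixedPoints_of_free S hne hfree)
end

section
/- Let G be a group acting on sets X and Y, let F : X → 𝒫(Y) be a G-equivariant set-valued function (F(g•x) = g•F(x) elementwise, for all g ∈ G, x ∈ X), and let f : X → Y be a selection of F, i.e. f(x) ∈ F(x) for all x. Suppose moreover that for every x ∈ X, F(x) is contained in the orbit of f(x) under Stab_G(x). Then f satisfies relaxed equivariance: for every g ∈ G and x ∈ X there exists s ∈ Stab_G(x) such that f(g•x) = (g·s)•f(x). -/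
open Pointwise

theorem mem_smul_orbit_submonoid_iff {M Y : Type*} [Monoid M] [MulAction M Y]
    {S : Submonoid M} {g : M} {y z : Y} :
    y ∈ g • MulAction.orbit S z ↔ ∃ s ∈ S, y = (g * s) • z := by
  simp only [Set.mem_smul_set, MulAction.mem_orbit_iff, Subtype.exists, Submonoid.mk_smul,
    exists_prop, mul_smul, eq_comm (a := y), exists_exists_and_eq_and]

theorem relaxed_equivariance_of_selection_general
    {M X Y : Type*} [Monoid M] [SMul M X] [MulAction M Y]
    (F : X → Set Y) (hF : ∀ (g : M) (x : X), F (g • x) ⊆ g • F x)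
    (f : X → Y) (hsel : ∀ x : X, f x ∈ F x)
    (S : X → Submonoid M) (horb : ∀ x : X, F x ⊆ MulAction.orbit (S x) (f x)) :
    ∀ (g : M) (x : X), ∃ s ∈ S x, f (g • x) = (g * s) • f x := by
  intro g x
  have hmem : f (g • x) ∈ g • F x := hF g x (hsel (g • x))
  exact mem_smul_orbit_submonoid_iff.mp (Set.smul_set_mono (horb x) hmem)

/-- A selection `f` of a `G`-equivariant set-valued function `F` whose values lie in the
orbit of `f x` under `Stab_G(x)` satisfies relaxed equivariance: for every `g` and `x`
there is `s ∈ Stab_G(x)` with `f (g • x) = (g * s) • f x`. -/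
theorem relaxed_equivariance_of_selection
    {G X Y : Type*} [Group G] [MulAction G X] [MulAction G Y]
    (F : X → Set Y) (hF : ∀ (g : G) (x : X), F (g • x) = g • F x)
    (f : X → Y) (hsel : ∀ x : X, f x ∈ F x)
    (horb : ∀ x : X, F x ⊆ MulAction.orbit (MulAction.stabilizer G x) (f x)) :
    ∀ (g : G) (x : X), ∃ s ∈ MulAction.stabilizer G x, f (g • x) = (g * s) • f x :=
  relaxed_equivariance_of_selection_general F (fun g x => (hF g x).subset) f hsel
    (fun x => (MulAction.stabilizer G x).toSubmonoid) horb
end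

section
/- Let n ≥ 2 and let D be the group with presentation ⟨a, b, m | a^{2n} = b² = m² = (ab)² = (am)² = (bm)² = 1⟩ (isomorphic to the point group D_{(2n)h}). Then the subgroup of D generated by {a², b} (isomorphic to the point group D_n) and the subgroup generated by {a·m, b·m} (isomorphic to C_{2v}) are complements: every element of D can be written uniquely as s·h with s in the subgroup generated by {a², b} and h in the subgroup generated by {a·m, b·m}. -/
/-!
Both `b` and `m` are involutions inverting `a`, and they commute, so `S = ⟨a², b⟩` is normalized by
`a`, `b` and `m`, hence normal. Since `m = b⁻¹ · bm` and `a = am · m⁻¹`, the subgroups `S` and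
`H = ⟨am, bm⟩` generate `D`, and it remains to see that they meet trivially. The substitution
`a ↦ ab`, `b ↦ 1`, `m ↦ bm` respects all the relations; the endomorphism of `D` it defines is
trivial on `S` and the identity on `H`.
-/

/-- Relations for the point group `D_{(2n)h}`, presented on generators `a, b, m`
(encoded as `0, 1, 2 : Fin 3`) with relations
`a^{2n} = b² = m² = (ab)² = (am)² = (bm)² = 1`. -/
def D2nhRels (n : ℕ) : Set (FreeGroup (Fin 3)) :=
  {(FreeGroup.of 0) ^ (2 * n), (FreeGroup.of 1) ^ 2, (FreeGroup.of 2) ^ 2,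
    (FreeGroup.of 0 * FreeGroup.of 1) ^ 2, (FreeGroup.of 0 * FreeGroup.of 2) ^ 2,
    (FreeGroup.of 1 * FreeGroup.of 2) ^ 2}

section Group

variable {G : Type*} [Group G]

lemma isComplement'_of_sup_eq_top_of_injOn {K : Type*} [MulOneClass K] {S H : Subgroup G}
    [S.Normal] (hSH : S ⊔ H = ⊤) (f : G →* K) (hS : S ≤ f.ker) (hH : Set.InjOn f H) :
    Subgroup.IsComplement' S H := by
  refine Subgroup.isComplement'_of_disjoint_and_mul_eq_univ ?_ ?_
  · refine Subgroup.disjoint_def.mpr fun {g} hgS hgH => hH hgH H.one_mem ?_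
    rw [map_one]
    exact hS hgS
  · rw [← Subgroup.normal_mul, hSH, Subgroup.coe_top]

lemma inv_eq_self_of_sq_eq_one {a : G} (ha : a ^ 2 = 1) : a⁻¹ = a :=
  inv_eq_of_mul_eq_one_left (by rw [← sq, ha])

lemma semiconjBy_inv_of_sq_eq_one {a b : G} (hb : b ^ 2 = 1) (hab : (a * b) ^ 2 = 1) :
    SemiconjBy b a a⁻¹ :=
  calc b * a = a⁻¹ * (a * b) ^ 2 * b⁻¹ := by rw [sq]; group
    _ = a⁻¹ * b := by rw [hab, mul_one, inv_eq_self_of_sq_eq_one hb]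

lemma commute_of_sq_eq_one {a b : G} (ha : a ^ 2 = 1) (hb : b ^ 2 = 1) (hab : (a * b) ^ 2 = 1) :
    Commute a b := by
  have hba : SemiconjBy b a a⁻¹ := semiconjBy_inv_of_sq_eq_one hb hab
  rw [inv_eq_self_of_sq_eq_one ha] at hba
  exact Commute.symm hba

lemma closure_pair_inv_left (x y : G) :
    Subgroup.closure {x⁻¹, y} = Subgroup.closure {x, y} := by
  simp only [Set.insert_eq, Subgroup.closure_union, ← Set.inv_singleton, Subgroup.closure_inv]

lemma closure_pair_mul_right (x y : G) :
    Subgroup.closure {x, x * y} = Subgroup.closure {x, y} := by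
  have hle (H : Subgroup G) : Subgroup.closure {x, x * y} ≤ H ↔ Subgroup.closure {x, y} ≤ H := by
    simp only [Subgroup.closure_le, Set.pair_subset_iff, SetLike.mem_coe]
    exact and_congr_right H.mul_mem_cancel_left
  exact eq_of_forall_ge_iff hle

lemma mem_normalizer_closure_pair_iff {g x y : G} :
    g ∈ Subgroup.normalizer (Subgroup.closure {x, y} : Set G) ↔
      Subgroup.closure {g * x * g⁻¹, g * y * g⁻¹} = Subgroup.closure {x, y} := by
  rw [Subgroup.mem_normalizer_iff_map_conj_eq, MonoidHom.map_closure, Set.image_pair]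
  simp only [MonoidHom.coe_coe, MulAut.conj_apply]

lemma mem_normalizer_closure_sq_pair {a b : G} (hba : SemiconjBy b a a⁻¹) :
    a ∈ Subgroup.normalizer (Subgroup.closure {a ^ 2, b} : Set G) := by
  have haa : a * a ^ 2 * a⁻¹ = a ^ 2 := by group
  have hab : a * b * a⁻¹ = a ^ 2 * b := by
    rw [mul_assoc, hba.inv_right.eq, inv_inv, ← mul_assoc, sq]
  rw [mem_normalizer_closure_pair_iff, haa, hab, closure_pair_mul_right]

lemma mem_normalizer_closure_pair_of_semiconjBy_inv {g x y : G} (hx : SemiconjBy g x x⁻¹)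
    (hy : Commute g y) : g ∈ Subgroup.normalizer (Subgroup.closure {x, y} : Set G) := by
  rw [mem_normalizer_closure_pair_iff, hx.eq, mul_inv_cancel_right, hy.eq, mul_inv_cancel_right,
    closure_pair_inv_left]

lemma normal_closure_sq_pair_of_semiconjBy_inv {a b m : G} (hgen : Subgroup.closure {a, b, m} = ⊤)
    (hba : SemiconjBy b a a⁻¹) (hma : SemiconjBy m a a⁻¹) (hmb : Commute m b) :
    (Subgroup.closure {a ^ 2, b}).Normal := by
  have hma2 : SemiconjBy m (a ^ 2) (a ^ 2)⁻¹ := inv_pow a 2 ▸ hma.pow_right 2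
  rw [← Subgroup.normalizer_eq_top_iff, ← top_le_iff, ← hgen, Subgroup.closure_le]
  rintro _ (rfl | rfl | rfl)
  · exact mem_normalizer_closure_sq_pair hba
  · exact Subgroup.le_normalizer (Subgroup.subset_closure (by simp))
  · exact mem_normalizer_closure_pair_of_semiconjBy_inv hma2 hmb

lemma closure_triple_le_sup_closure_mul_pair {S : Subgroup G} {a b m : G} (hb : b ∈ S) :
    Subgroup.closure {a, b, m} ≤ S ⊔ Subgroup.closure {a * m, b * m} := by
  set T := S ⊔ Subgroup.closure {a * m, b * m}
  have hbT : b ∈ T := Subgroup.mem_sup_left hb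
  have hamT : a * m ∈ T := Subgroup.mem_sup_right (Subgroup.subset_closure (by simp))
  have hbmT : b * m ∈ T := Subgroup.mem_sup_right (Subgroup.subset_closure (by simp))
  have hmT : m ∈ T := (T.mul_mem_cancel_left hbT).mp hbmT
  have haT : a ∈ T := (T.mul_mem_cancel_right hmT).mp hamT
  rw [Subgroup.closure_le]
  rintro _ (rfl | rfl | rfl)
  exacts [haT, hbT, hmT]

end Group

/-- The group `D_{(2n)h}` presented by `D2nhRels n`. -/
abbrev D2nh (n : ℕ) : Type := PresentedGroup (D2nhRels n)

namespace D2nh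

variable {n : ℕ}

/-- The generator `a` of `D_{(2n)h}`, a rotation by `2π/(2n)` about the principal axis. -/
abbrev a : D2nh n := PresentedGroup.of 0

/-- The generator `b` of `D_{(2n)h}`, a 2-fold rotation about an axis perpendicular to that of
`a`. -/
abbrev b : D2nh n := PresentedGroup.of 1

/-- The generator `m` of `D_{(2n)h}`, a mirror reflection. -/
abbrev m : D2nh n := PresentedGroup.of 2

lemma b_sq : (b : D2nh n) ^ 2 = 1 :=
  PresentedGroup.one_of_mem (x := .of 1 ^ 2) (by simp [D2nhRels])

lemma m_sq : (m : D2nh n) ^ 2 = 1 :=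
  PresentedGroup.one_of_mem (x := .of 2 ^ 2) (by simp [D2nhRels])

lemma a_mul_b_sq : (a * b : D2nh n) ^ 2 = 1 :=
  PresentedGroup.one_of_mem (x := (.of 0 * .of 1) ^ 2) (by simp [D2nhRels])

lemma a_mul_m_sq : (a * m : D2nh n) ^ 2 = 1 :=
  PresentedGroup.one_of_mem (x := (.of 0 * .of 2) ^ 2) (by simp [D2nhRels])

lemma b_mul_m_sq : (b * m : D2nh n) ^ 2 = 1 :=
  PresentedGroup.one_of_mem (x := (.of 1 * .of 2) ^ 2) (by simp [D2nhRels])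

lemma closure_eq_top : Subgroup.closure {a, b, m} = (⊤ : Subgroup (D2nh n)) := by
  rw [← PresentedGroup.closure_range_of]
  congr 1
  ext
  simp [Fin.exists_fin_succ, eq_comm]

lemma commute_b_m : Commute (b : D2nh n) m := commute_of_sq_eq_one b_sq m_sq b_mul_m_sq

lemma a_mul_b_mul_b_mul_m : (a * b * (b * m) : D2nh n) = a * m := by
  rw [mul_assoc, ← mul_assoc b, ← sq, b_sq, one_mul]

/-- The endomorphism of `D_{(2n)h}` with `a ↦ ab`, `b ↦ 1`, `m ↦ bm`. It is a retraction onto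
`⟨am, bm⟩`. -/
def retraction (n : ℕ) : D2nh n →* D2nh n :=
  PresentedGroup.toGroup (f := ![a * b, 1, b * m]) (by
    rintro _ (rfl | rfl | rfl | rfl | rfl | rfl) <;>
      simp [pow_mul, a_mul_b_sq, b_mul_m_sq, a_mul_b_mul_b_mul_m, a_mul_m_sq])

lemma retraction_a : retraction n a = a * b := PresentedGroup.toGroup.of _

lemma retraction_b : retraction n b = 1 := PresentedGroup.toGroup.of _

lemma retraction_m : retraction n m = b * m := PresentedGroup.toGroup.of _

lemma closure_sq_pair_le_ker_retraction :
    Subgroup.closure {a ^ 2, b} ≤ (retraction n).ker := by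
  rw [Subgroup.closure_le, Set.pair_subset_iff]
  constructor
  · simp [retraction_a, a_mul_b_sq]
  · simp [retraction_b]

lemma eqOn_retraction_id :
    Set.EqOn (retraction n) (MonoidHom.id _)
      (Subgroup.closure {a * m, b * m} : Subgroup (D2nh n)) := by
  refine MonoidHom.eqOn_closure ?_
  rintro _ (rfl | rfl)
  · simp [retraction_a, retraction_m, a_mul_b_mul_b_mul_m]
  · simp [retraction_b, retraction_m]

lemma injOn_retraction :
    Set.InjOn (retraction n) (Subgroup.closure {a * m, b * m} : Subgroup (D2nh n)) :=
  eqOn_retraction_id.injOn_iff.mpr Function.injective_id.injOn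

lemma normal_closure_sq_pair : (Subgroup.closure {(a : D2nh n) ^ 2, b}).Normal :=
  normal_closure_sq_pair_of_semiconjBy_inv closure_eq_top
    (semiconjBy_inv_of_sq_eq_one b_sq a_mul_b_sq)
    (semiconjBy_inv_of_sq_eq_one m_sq a_mul_m_sq) commute_b_m.symm

lemma closure_sq_pair_sup_closure_mul_pair :
    Subgroup.closure {(a : D2nh n) ^ 2, b} ⊔ Subgroup.closure {a * m, b * m} = ⊤ := by
  rw [← top_le_iff, ← closure_eq_top]
  exact closure_triple_le_sup_closure_mul_pair (Subgroup.subset_closure (by simp))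

end D2nh

/-- In the presented group `D_{(2n)h} = ⟨a,b,m | a^{2n}, b², m², (ab)², (am)², (bm)²⟩`,
the subgroup generated by `{a², b}` (≅ `D_n`) and the subgroup generated by
`{a·m, b·m}` (≅ `C_{2v}`) are complements. -/
theorem D2nh_complement (n : ℕ) (hn : 2 ≤ n) :
    Subgroup.IsComplement'
      (Subgroup.closure
        {(PresentedGroup.of (0 : Fin 3) : PresentedGroup (D2nhRels n)) ^ 2,
          PresentedGroup.of 1})
      (Subgroup.closure
        {(PresentedGroup.of (0 : Fin 3) : PresentedGroup (D2nhRels n)) *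
            PresentedGroup.of 2,
          PresentedGroup.of 1 * PresentedGroup.of 2}) := by
  have hnormal := D2nh.normal_closure_sq_pair (n := n)
  exact isComplement'_of_sup_eq_top_of_injOn D2nh.closure_sq_pair_sup_closure_mul_pair
    (D2nh.retraction n) D2nh.closure_sq_pair_le_ker_retraction D2nh.injOn_retraction
end

section
/- Let O_h be the group with presentation ⟨a, b, i | a⁴ = b⁴ = i² = (aba)² = (ab)³ = 1, i·a·i·a⁻¹ = 1, i·b·i·b⁻¹ = 1⟩ (isomorphic to the full octahedral point group O_h of order 48). Then the subgroup of O_h generated by {a·b, b·a} (isomorphic to the tetrahedral rotation group T of order 12) and the subgroup generated by {a²·b, i} (isomorphic to the point group S₄, cyclic of order 4) are complements: every element of O_h can be written uniquely as s·h with s in the subgroup generated by {a·b, b·a} and h in the subgroup generated by {a²·b, i}. -/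
/-!
Write `T = ⟨ab, ba⟩`, `t = a²b` and `H = ⟨t, i⟩`. The relation `(aba)² = 1` says that
`(ab)a²(ba) = 1`, so `a² ∈ T`. Since `a` conjugates `ba` to `ab`, and `ab` to the conjugate of `ba`
by `a²`, it normalizes `T`. So does `b = a⁻¹(ab)`, and `i` is central; hence `T` is normal. From
`t = a(ab)` one gets `a, b, i ∈ TH`, so `TH` is the whole group.

The same relation gives `t² = 1`, so `H` is the Klein four-group `{1, t, i, ti}` (in particular it
is not cyclic). Modulo `T` its elements are `1`, `a`, `i`, `ai`, so `T ∩ H = 1` as soon as none of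
the last three lies in `T`; this is detected by a homomorphism to `ℤˣ × ℤˣ`.
-/

/-- Relations for the full octahedral point group `O_h`, presented on generators
`a, b, i` (encoded as `0, 1, 2 : Fin 3`) with relations
`a⁴ = b⁴ = i² = (aba)² = (ab)³ = 1`, `i·a·i·a⁻¹ = 1`, `i·b·i·b⁻¹ = 1`. -/
def OhRels : Set (FreeGroup (Fin 3)) :=
  {(FreeGroup.of 0) ^ 4, (FreeGroup.of 1) ^ 4, (FreeGroup.of 2) ^ 2,
    (FreeGroup.of 0 * FreeGroup.of 1 * FreeGroup.of 0) ^ 2,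
    (FreeGroup.of 0 * FreeGroup.of 1) ^ 3,
    FreeGroup.of 2 * FreeGroup.of 0 * FreeGroup.of 2 * (FreeGroup.of 0)⁻¹,
    FreeGroup.of 2 * FreeGroup.of 1 * FreeGroup.of 2 * (FreeGroup.of 1)⁻¹}

section Complement

open Subgroup

variable {G : Type*} [Group G]

lemma mem_normalizer_closure_of_sq_mem {S : Set G} {g : G} (hg : g ^ 2 ∈ closure S)
    (hconj : ∀ s ∈ S, g * s * g⁻¹ ∈ closure S) : g ∈ normalizer (closure S : Set G) := by
  have conj_mem : ∀ n ∈ closure S, g * n * g⁻¹ ∈ closure S := fun n hn =>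
    (closure_le (K := (closure S).comap (MulAut.conj g).toMonoidHom)).2 hconj hn
  refine mem_normalizer_iff.2 fun n => ⟨conj_mem n, fun hn => ?_⟩
  have hn' : n = (g ^ 2)⁻¹ * (g * (g * n * g⁻¹) * g⁻¹) * g ^ 2 := by group
  rw [hn']
  exact mul_mem (mul_mem (inv_mem hg) (conj_mem _ hn)) hg

lemma coe_closure_pair_of_commute_of_sq_eq_one {x y : G} (hxy : Commute x y) (hx : x ^ 2 = 1)
    (hy : y ^ 2 = 1) : (closure {x, y} : Set G) = {1, x, y, x * y} := by
  have hx_inv : x⁻¹ = x := inv_eq_of_mul_eq_one_right (by rwa [← pow_two])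
  have hy_inv : y⁻¹ = y := inv_eq_of_mul_eq_one_right (by rwa [← pow_two])
  have hx_mem : x ∈ closure {x, y} := mem_closure_of_mem (by simp)
  have hy_mem : y ∈ closure {x, y} := mem_closure_of_mem (by simp)
  refine Set.Subset.antisymm (fun g hg => ?_) ?_
  · have mul_generator : ∀ h ∈ ({1, x, y, x * y} : Set G), ∀ s ∈ ({x, y} : Set G),
        h * s ∈ ({1, x, y, x * y} : Set G) := by
      have hyx : y * x = x * y := hxy.eq.symm
      have hxyx : x * y * x = y := by rw [mul_assoc, hyx, ← mul_assoc, ← pow_two, hx, one_mul]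
      have hxyy : x * y * y = x := by rw [mul_assoc, ← pow_two, hy, mul_one]
      rintro h (rfl | rfl | rfl | rfl) s (rfl | rfl) <;>
        simp [← pow_two, hx, hy, hyx, hxyx, hxyy]
    induction hg using closure_induction_right with
    | one => exact Set.mem_insert _ _
    | mul_right h _ s hs ih => exact mul_generator h ih s hs
    | mul_inv_cancel h _ s hs ih =>
      have hs_inv : s⁻¹ = s := by rcases hs with rfl | rfl <;> assumption
      rw [hs_inv]
      exact mul_generator h ih s hs
  · rintro g (rfl | rfl | rfl | rfl)
    exacts [one_mem _, hx_mem, hy_mem, mul_mem hx_mem hy_mem]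

lemma commute_of_sq_eq_one_of_mul_mul_mul_inv_eq_one {x y : G} (hx : x ^ 2 = 1)
    (hxy : x * y * x * y⁻¹ = 1) : Commute x y := by
  have hx_inv : x⁻¹ = x := inv_eq_of_mul_eq_one_right (by rwa [← pow_two])
  rwa [mul_inv_eq_one, ← eq_mul_inv_iff_mul_eq, hx_inv] at hxy

variable {a b i : G}

lemma sq_sq_mul_eq_one (haba : (a * b * a) ^ 2 = 1) : (a ^ 2 * b) ^ 2 = 1 := by
  have hconj : a ^ 2 * b = a * (a * b * a) * a⁻¹ := by simp [pow_two, mul_assoc]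
  rw [hconj, conj_pow, haba, mul_one, mul_inv_cancel]

lemma sq_mem_closure_mul_mul_swap (haba : (a * b * a) ^ 2 = 1) :
    a ^ 2 ∈ closure {a * b, b * a} := by
  have hsq : a ^ 2 = (a * b)⁻¹ * (b * a)⁻¹ :=
    calc
      a ^ 2 = (a * b)⁻¹ * (a * b * a) ^ 2 * (b * a)⁻¹ := by simp [pow_two, mul_assoc]
      _ = (a * b)⁻¹ * (b * a)⁻¹ := by rw [haba, mul_one]
  rw [hsq]
  exact mul_mem (inv_mem (mem_closure_of_mem (by simp))) (inv_mem (mem_closure_of_mem (by simp)))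

lemma mem_normalizer_closure_mul_mul_swap (haba : (a * b * a) ^ 2 = 1) :
    a ∈ normalizer (closure {a * b, b * a} : Set G) := by
  have ha := sq_mem_closure_mul_mul_swap haba
  refine mem_normalizer_closure_of_sq_mem ha ?_
  rintro s (rfl | rfl)
  · have hconj : a * (a * b) * a⁻¹ = a ^ 2 * (b * a) * (a ^ 2)⁻¹ := by
      simp [pow_two, mul_assoc]
    rw [hconj]
    exact mul_mem (mul_mem ha (mem_closure_of_mem (by simp))) (inv_mem ha)
  · have hconj : a * (b * a) * a⁻¹ = a * b := by group
    rw [hconj]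
    exact mem_closure_of_mem (by simp)

lemma normal_closure_mul_mul_swap (hgen : closure {a, b, i} = ⊤) (haba : (a * b * a) ^ 2 = 1)
    (hi : i ∈ normalizer (closure {a * b, b * a} : Set G)) :
    (closure {a * b, b * a}).Normal := by
  have ha := mem_normalizer_closure_mul_mul_swap haba
  have hab : a * b ∈ normalizer (closure {a * b, b * a} : Set G) :=
    le_normalizer (mem_closure_of_mem (by simp))
  rw [← normalizer_eq_top_iff, eq_top_iff, ← hgen, closure_le]
  rintro g (rfl | rfl | rfl)
  exacts [ha, (Subgroup.mul_mem_cancel_left _ ha).1 hab, hi]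

lemma closure_mul_mul_swap_sup_closure_eq_top (hgen : closure {a, b, i} = ⊤) :
    closure {a * b, b * a} ⊔ closure {a ^ 2 * b, i} = ⊤ := by
  have hab : a * b ∈ closure {a * b, b * a} ⊔ closure {a ^ 2 * b, i} :=
    mem_sup_left (mem_closure_of_mem (by simp))
  have ht : a * (a * b) ∈ closure {a * b, b * a} ⊔ closure {a ^ 2 * b, i} :=
    mem_sup_right (mem_closure_of_mem (by simp [pow_two, mul_assoc]))
  have ha := (Subgroup.mul_mem_cancel_right _ hab).1 ht
  rw [eq_top_iff, ← hgen, closure_le]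
  rintro g (rfl | rfl | rfl)
  exacts [ha, (Subgroup.mul_mem_cancel_left _ ha).1 hab,
    mem_sup_right (mem_closure_of_mem (by simp))]

lemma disjoint_closure_mul_mul_swap (haba : (a * b * a) ^ 2 = 1) (hi : i ^ 2 = 1)
    (hai : Commute a i) (hbi : Commute b i) (ha_notMem : a ∉ closure {a * b, b * a})
    (hi_notMem : i ∉ closure {a * b, b * a}) (hai_notMem : a * i ∉ closure {a * b, b * a}) :
    Disjoint (closure {a * b, b * a}) (closure {a ^ 2 * b, i}) := by
  have hab : a * b ∈ closure {a * b, b * a} := mem_closure_of_mem (by simp)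
  have ht : a ^ 2 * b = a * (a * b) := by rw [pow_two, mul_assoc]
  have hti : a ^ 2 * b * i = a * i * (a * b) := by
    rw [ht, mul_assoc, (hai.mul_left hbi).eq, ← mul_assoc]
  rw [disjoint_def]
  intro g hgT hgH
  rw [← SetLike.mem_coe, coe_closure_pair_of_commute_of_sq_eq_one ((hai.pow_left 2).mul_left hbi)
    (sq_sq_mul_eq_one haba) hi] at hgH
  rcases hgH with rfl | rfl | rfl | rfl
  · rfl
  · exact absurd ((Subgroup.mul_mem_cancel_right _ hab).1 (ht ▸ hgT)) ha_notMem
  · exact absurd hgT hi_notMem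
  · exact absurd ((Subgroup.mul_mem_cancel_right _ hab).1 (hti ▸ hgT)) hai_notMem

theorem Oh_complement_general (hgen : closure {a, b, i} = ⊤) (haba : (a * b * a) ^ 2 = 1)
    (hi : i ^ 2 = 1) (hai : Commute a i) (hbi : Commute b i)
    (ha_notMem : a ∉ closure {a * b, b * a})
    (hi_notMem : i ∉ closure {a * b, b * a}) (hai_notMem : a * i ∉ closure {a * b, b * a}) :
    IsComplement' (closure {a * b, b * a}) (closure {a ^ 2 * b, i}) := by
  have hi_centralizer : i ∈ centralizer {a * b, b * a} := by
    rintro s (rfl | rfl)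
    exacts [hai.mul_left hbi, hbi.mul_left hai]
  have : (closure {a * b, b * a}).Normal := normal_closure_mul_mul_swap hgen haba <|
    normalizer_le_normalizer_closure _ (centralizer_le_normalizer _ hi_centralizer)
  refine isComplement'_of_disjoint_and_mul_eq_univ
    (disjoint_closure_mul_mul_swap haba hi hai hbi ha_notMem hi_notMem hai_notMem) ?_
  rw [← normal_mul, closure_mul_mul_swap_sup_closure_eq_top hgen, coe_top]

end Complement

lemma closure_of_zero_one_two (rels : Set (FreeGroup (Fin 3))) :
    Subgroup.closure {(.of 0 : PresentedGroup rels), .of 1, .of 2} = ⊤ := by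
  rw [← PresentedGroup.closure_range_of]
  congr 1
  ext g
  simp [Fin.exists_fin_succ, eq_comm]

namespace OhRels

open Subgroup

lemma of_zero_mul_of_one_mul_of_zero_sq :
    ((.of 0 : PresentedGroup OhRels) * .of 1 * .of 0) ^ 2 = 1 :=
  PresentedGroup.one_of_mem (x := (FreeGroup.of 0 * FreeGroup.of 1 * FreeGroup.of 0) ^ 2)
    (by simp [OhRels])

lemma of_two_sq : (.of 2 : PresentedGroup OhRels) ^ 2 = 1 :=
  PresentedGroup.one_of_mem (x := FreeGroup.of 2 ^ 2) (by simp [OhRels])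

lemma commute_of_zero_of_two : Commute (.of 0 : PresentedGroup OhRels) (.of 2) :=
  (commute_of_sq_eq_one_of_mul_mul_mul_inv_eq_one of_two_sq <| PresentedGroup.one_of_mem
    (x := FreeGroup.of 2 * FreeGroup.of 0 * FreeGroup.of 2 * (FreeGroup.of 0)⁻¹)
    (by simp [OhRels])).symm

lemma commute_of_one_of_two : Commute (.of 1 : PresentedGroup OhRels) (.of 2) :=
  (commute_of_sq_eq_one_of_mul_mul_mul_inv_eq_one of_two_sq <| PresentedGroup.one_of_mem
    (x := FreeGroup.of 2 * FreeGroup.of 1 * FreeGroup.of 2 * (FreeGroup.of 1)⁻¹)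
    (by simp [OhRels])).symm

/-- The homomorphism `O_h → ℤˣ × ℤˣ` with `a, b ↦ (-1, 1)` and `i ↦ (1, -1)`, which separates the
cosets of `⟨ab, ba⟩`. Geometrically, the first component is the sign of the rotation part as a
permutation of the four diagonals of the cube, and the second is the determinant. -/
def sign : PresentedGroup OhRels →* ℤˣ × ℤˣ :=
  PresentedGroup.toGroup (f := ![(-1, 1), (-1, 1), (1, -1)]) <| by
    rintro r (rfl | rfl | rfl | rfl | rfl | rfl | rfl) <;>
      simp only [map_mul, map_pow, map_inv, FreeGroup.lift_apply_of] <;> decide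

lemma sign_of_zero : sign (.of 0) = (-1, 1) := PresentedGroup.toGroup.of _

lemma sign_of_one : sign (.of 1) = (-1, 1) := PresentedGroup.toGroup.of _

lemma sign_of_two : sign (.of 2) = (1, -1) := PresentedGroup.toGroup.of _

lemma notMem_closure_of_sign_ne_one {g : PresentedGroup OhRels} (hg : sign g ≠ 1) :
    g ∉ closure {(.of 0 : PresentedGroup OhRels) * .of 1, .of 1 * .of 0} := by
  have le_ker : closure {(.of 0 : PresentedGroup OhRels) * .of 1, .of 1 * .of 0} ≤ sign.ker := by
    rw [closure_le]
    rintro s (rfl | rfl) <;> simp [MonoidHom.mem_ker, sign_of_zero, sign_of_one]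
  exact fun hmem => hg (le_ker hmem)

lemma of_zero_notMem_closure :
    .of 0 ∉ closure {(.of 0 : PresentedGroup OhRels) * .of 1, .of 1 * .of 0} :=
  notMem_closure_of_sign_ne_one (by simp [sign_of_zero])

lemma of_two_notMem_closure :
    .of 2 ∉ closure {(.of 0 : PresentedGroup OhRels) * .of 1, .of 1 * .of 0} :=
  notMem_closure_of_sign_ne_one (by simp [sign_of_two])

lemma of_zero_mul_of_two_notMem_closure :
    .of 0 * .of 2 ∉ closure {(.of 0 : PresentedGroup OhRels) * .of 1, .of 1 * .of 0} :=
  notMem_closure_of_sign_ne_one (by simp [sign_of_zero, sign_of_two])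

end OhRels

/-- In the presented group `O_h = ⟨a,b,i | a⁴, b⁴, i², (aba)², (ab)³, iaia⁻¹, ibib⁻¹⟩`,
the subgroup generated by `{a·b, b·a}` (≅ the tetrahedral rotation group `T`) and the
subgroup generated by `{a²·b, i}` (≅ the point group `S₄`) are complements. -/
theorem Oh_complement :
    Subgroup.IsComplement'
      (Subgroup.closure
        {(PresentedGroup.of (0 : Fin 3) : PresentedGroup OhRels) * PresentedGroup.of 1,
          PresentedGroup.of 1 * PresentedGroup.of 0})
      (Subgroup.closure
        {(PresentedGroup.of (0 : Fin 3) : PresentedGroup OhRels) ^ 2 *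
            PresentedGroup.of 1,
          PresentedGroup.of 2}) :=
  Oh_complement_general (closure_of_zero_one_two OhRels) OhRels.of_zero_mul_of_one_mul_of_zero_sq
    OhRels.of_two_sq OhRels.commute_of_zero_of_two OhRels.commute_of_one_of_two
    OhRels.of_zero_notMem_closure OhRels.of_two_notMem_closure
    OhRels.of_zero_mul_of_two_notMem_closure
end
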